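/- Let Ω ⊂ ℝ^N, N ≥ 2, be a bounded domain and set R = sup_{x ∈ Ω} H⁰(x). Then for every u ∈ C_c^∞(Ω), ((N−1)/N)^N · ∫_Ω |u(x)|^N / ( H⁰(x)^N (log(R/H⁰(x)))^N ) dx ≤ ∫_Ω |(x/H⁰(x)) · ∇u(x)|^N dx. -/

import Mathlib

/-!
Along the ray through `ω` take `s = log (R / g x)` as coordinate, so `x = (R / g ω) e^{-s} ω`. Then
`dx / g(x)^N = g(ω)^{-N} ds dω`, and `x · ∇u` becomes `-d/ds`. On each ray the critical Hardy
inequality is therefore the classical one, `((p - 1) / p)^p ∫ |f|^p / s^p ds ≤ ∫ |f'|^p ds`, for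
`f(s) = u(x)`. This `f` vanishes near `s = 0`, because a positively homogeneous function does not
attain its supremum on an open set and so stays away from `R` on the support of `u`. The classical
inequality follows by integrating `(|f|^p s^(1 - p))'` and applying Young's inequality.
-/

open MeasureTheory Set Filter
open scoped RealInnerProductSpace Topology ENNReal NNReal

noncomputable section

/-- `ℝ^N` as a Euclidean space. -/
abbrev Euc (N : ℕ) := EuclideanSpace ℝ (Fin N)

/-- `H : ℝ^N → ℝ` is a Finsler norm: nonnegative, convex, `C²` away from the origin,
even and positively one-homogeneous, comparable to the Euclidean norm, and with
positive definite Hessian of `H²` away from the origin. -/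
structure IsFinslerNorm {N : ℕ} (H : Euc N → ℝ) : Prop where
  nonneg : ∀ ξ, 0 ≤ H ξ
  convexOn : ConvexOn ℝ Set.univ H
  smooth : ContDiffOn ℝ 2 H {(0 : Euc N)}ᶜ
  homog : ∀ (t : ℝ) (ξ : Euc N), H (t • ξ) = |t| * H ξ
  bounds : ∃ a b : ℝ, 0 < a ∧ a ≤ b ∧ ∀ ξ : Euc N, a * ‖ξ‖ ≤ H ξ ∧ H ξ ≤ b * ‖ξ‖
  hessPosDef : ∀ ξ : Euc N, ξ ≠ 0 → ∀ v : Euc N, v ≠ 0 →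
    0 < iteratedFDeriv ℝ 2 (fun x => (H x) ^ 2) ξ ![v, v]

/-- The polar function `H⁰(x) = sup_{ξ ≠ 0} (ξ·x)/H(ξ)` of a Finsler norm. -/
def polarNorm {N : ℕ} (H : Euc N → ℝ) (x : Euc N) : ℝ :=
  sSup {r : ℝ | ∃ ξ : Euc N, ξ ≠ 0 ∧ r = ⟪ξ, x⟫ / H ξ}

/-- `u ∈ C_c^∞(Ω)`: a smooth function with compact support contained in `Ω`. -/
def IsTestFun {N : ℕ} (Ω : Set (Euc N)) (u : Euc N → ℝ) : Prop :=
  ContDiff ℝ (⊤ : ℕ∞) u ∧ HasCompactSupport u ∧ tsupport u ⊆ Ω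

/-! ### The classical Hardy inequality -/

lemma mul_rpow_sub_one_mul_le {p A B : ℝ} (hp : 1 < p) (hA : 0 ≤ A) (hB : 0 ≤ B) :
    p * A ^ (p - 1) * B ≤ B ^ p + (p - 1) * A ^ p := by
  have : 0 < p := by linarith
  have hp1 : p - 1 ≠ 0 := by linarith
  have young := Real.young_inequality_of_nonneg hB (Real.rpow_nonneg hA (p - 1))
    (Real.HolderConjugate.conjExponent hp)
  rw [Real.conjExponent, ← Real.rpow_mul hA, mul_div_cancel₀ p hp1] at young
  calc p * A ^ (p - 1) * B = p * (B * A ^ (p - 1)) := by ring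
    _ ≤ p * (B ^ p / p + A ^ p / (p / (p - 1))) := by gcongr
    _ = B ^ p + (p - 1) * A ^ p := by field_simp

/-- Young's inequality for `A = (p - 1) / p * (y / s)` and `B = w`. For `y = ‖f s‖`, `w = ‖f' s‖`
and `d = (‖f‖ ^ p)' s`, the bracket is the derivative of `‖f s‖ ^ p * s ^ (1 - p)`. -/
lemma hardy_pointwise {p s y w d : ℝ} (hp : 1 < p) (hs : 0 < s) (hy : 0 ≤ y) (hw : 0 ≤ w)
    (hd : d ≤ p * y ^ (p - 1) * w) :
    ((p - 1) / p) ^ p * (y ^ p / s ^ p) +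
      ((p - 1) / p) ^ (p - 1) * (d * s ^ (1 - p) + y ^ p * ((1 - p) * s ^ (-p))) ≤ w ^ p := by
  set c := (p - 1) / p with hc
  have hp0 : 0 < p := by linarith
  have hc0 : 0 < c := div_pos (by linarith) hp0
  have hcp : c ^ p = c ^ (p - 1) * c := by
    rw [← Real.rpow_add_one hc0.ne', sub_add_cancel]
  have hs_neg : s ^ (1 - p) = (s ^ (p - 1))⁻¹ := by rw [← Real.rpow_neg hs.le, neg_sub]
  have young := mul_rpow_sub_one_mul_le hp (A := c * (y / s)) (by positivity) hw
  rw [Real.mul_rpow hc0.le (by positivity), Real.mul_rpow hc0.le (by positivity),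
    Real.div_rpow hy hs.le, Real.div_rpow hy hs.le, hcp] at young
  calc c ^ p * (y ^ p / s ^ p) + c ^ (p - 1) * (d * s ^ (1 - p) + y ^ p * ((1 - p) * s ^ (-p)))
      ≤ c ^ p * (y ^ p / s ^ p) + c ^ (p - 1) *
          (p * y ^ (p - 1) * w * s ^ (1 - p) + y ^ p * ((1 - p) * s ^ (-p))) := by gcongr
    _ = p * (c ^ (p - 1) * (y ^ (p - 1) / s ^ (p - 1))) * w -
          (p - 1) * (c ^ (p - 1) * c * (y ^ p / s ^ p)) := by
        rw [hcp, hs_neg, Real.rpow_neg hs.le, hc]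
        field_simp
        ring
    _ ≤ w ^ p := by linarith

section Hardy

variable {F : Type*} [NormedAddCommGroup F] {p a b : ℝ} {f : ℝ → F}

lemma continuousOn_rpow_uIcc (ha : 0 < a) (hab : a ≤ b) (q : ℝ) :
    ContinuousOn (fun s : ℝ => s ^ q) (uIcc a b) :=
  continuousOn_id.rpow_const fun _ hs => .inl (ha.trans_le (uIcc_of_le hab ▸ hs).1).ne'

lemma intervalIntegrable_norm_rpow_div_rpow (hp : 0 ≤ p) (ha : 0 < a) (hab : a ≤ b)
    (hf : Continuous f) : IntervalIntegrable (fun s => ‖f s‖ ^ p / s ^ p) volume a b := by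
  have hpow : ∀ s ∈ uIcc a b, s ^ p ≠ 0 := fun s hs =>
    (Real.rpow_pos_of_pos (ha.trans_le (uIcc_of_le hab ▸ hs).1) p).ne'
  exact ((hf.norm.rpow_const fun _ => .inr hp).continuousOn.div
    (continuousOn_rpow_uIcc ha hab p) hpow).intervalIntegrable

variable [InnerProductSpace ℝ F]

lemma deriv_norm_rpow_le (hp : 1 < p) (hf : Differentiable ℝ f) (s : ℝ) :
    deriv (fun t => ‖f t‖ ^ p) s ≤ p * ‖f s‖ ^ (p - 1) * ‖deriv f s‖ := by
  have hbound := norm_fderiv_norm_rpow_le hf (x := s) hp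
  rw [← norm_deriv_eq_norm_fderiv, ← norm_deriv_eq_norm_fderiv] at hbound
  exact (le_abs_self _).trans hbound

lemma hardy_intervalIntegral (hp : 1 < p) (ha : 0 < a) (hab : a ≤ b)
    (hf : ContDiff ℝ 1 f) (hfa : f a = 0) :
    ((p - 1) / p) ^ p * ∫ s in a..b, ‖f s‖ ^ p / s ^ p ≤ ∫ s in a..b, ‖deriv f s‖ ^ p := by
  set c := (p - 1) / p
  have hp0 : 0 < p := by linarith
  have : 0 < c := div_pos (by linarith) hp0
  let φ : ℝ → ℝ := fun s => ‖f s‖ ^ p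
  have hφ : ContDiff ℝ 1 φ := hf.norm_rpow hp
  let G' : ℝ → ℝ := fun s => deriv φ s * s ^ (1 - p) + φ s * ((1 - p) * s ^ (-p))
  have hG : ∀ s ∈ uIcc a b, HasDerivAt (fun s => φ s * s ^ (1 - p)) (G' s) s := fun s hs => by
    have hs0 : s ≠ 0 := (ha.trans_le (uIcc_of_le hab ▸ hs).1).ne'
    have hpow := Real.hasDerivAt_rpow_const (p := 1 - p) (.inl hs0)
    rw [show 1 - p - 1 = -p by ring] at hpow
    exact (hφ.differentiable one_ne_zero s).hasDerivAt.mul hpow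
  have hG'int : IntervalIntegrable G' volume a b :=
    (((hφ.continuous_deriv le_rfl).continuousOn.mul (continuousOn_rpow_uIcc ha hab _)).add
      (hφ.continuous.continuousOn.mul
        (continuousOn_const.mul (continuousOn_rpow_uIcc ha hab _)))).intervalIntegrable
  have hFint := intervalIntegrable_norm_rpow_div_rpow hp0.le ha hab hf.continuous
  have hint : ∫ s in a..b, (c ^ p * (‖f s‖ ^ p / s ^ p) + c ^ (p - 1) * G' s) ≤
      ∫ s in a..b, ‖deriv f s‖ ^ p :=
    intervalIntegral.integral_mono_on hab ((hFint.const_mul _).add (hG'int.const_mul _))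
      (((hf.continuous_deriv le_rfl).norm.rpow_const fun _ => .inr hp0.le).intervalIntegrable a b)
      fun s hs => hardy_pointwise hp (ha.trans_le hs.1) (norm_nonneg _) (norm_nonneg _)
        (deriv_norm_rpow_le hp (hf.differentiable one_ne_zero) s)
  rw [intervalIntegral.integral_add (hFint.const_mul _) (hG'int.const_mul _),
    intervalIntegral.integral_const_mul, intervalIntegral.integral_const_mul,
    intervalIntegral.integral_eq_sub_of_hasDerivAt hG hG'int] at hint
  have hleft : φ a = 0 := by simp only [φ, hfa, norm_zero, Real.zero_rpow hp0.ne']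
  have hright : 0 ≤ c ^ (p - 1) * (φ b * b ^ (1 - p)) := by
    have := ha.trans_le hab
    positivity
  rw [hleft, zero_mul, sub_zero] at hint
  linarith

lemma hardy_setLIntegral_Ioc (hp : 1 < p) (ha : 0 < a) (hab : a ≤ b)
    (hf : ContDiff ℝ 1 f) (hfa : f a = 0) :
    ENNReal.ofReal (((p - 1) / p) ^ p) * ∫⁻ s in Ioc a b, ENNReal.ofReal (‖f s‖ ^ p / s ^ p) ≤
      ∫⁻ s in Ioc a b, ENNReal.ofReal (‖deriv f s‖ ^ p) := by
  have hp0 : 0 < p := by linarith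
  have hc : 0 ≤ ((p - 1) / p) ^ p := Real.rpow_nonneg (div_nonneg (by linarith) hp0.le) p
  have hWint : IntegrableOn (fun s => ‖deriv f s‖ ^ p) (Ioc a b) :=
    ((hf.continuous_deriv le_rfl).norm.rpow_const fun _ => .inr hp0.le).integrableOn_Ioc
  have hFnonneg : 0 ≤ᵐ[volume.restrict (Ioc a b)] fun s => ‖f s‖ ^ p / s ^ p := by
    filter_upwards [ae_restrict_mem measurableSet_Ioc] with s hs
    have := ha.trans hs.1
    positivity
  rw [← ofReal_integral_eq_lintegral_ofReal
      (intervalIntegrable_norm_rpow_div_rpow hp0.le ha hab hf.continuous).1 hFnonneg,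
    ← ofReal_integral_eq_lintegral_ofReal hWint (.of_forall fun s => by positivity),
    ← ENNReal.ofReal_mul hc, ← intervalIntegral.integral_of_le hab,
    ← intervalIntegral.integral_of_le hab]
  exact ENNReal.ofReal_le_ofReal (hardy_intervalIntegral hp ha hab hf hfa)

lemma hardy_lintegral (hp : 1 < p) (ha : 0 < a) (hf : ContDiff ℝ 1 f) (hfa : ∀ s ≤ a, f s = 0) :
    ENNReal.ofReal (((p - 1) / p) ^ p) * ∫⁻ s, ENNReal.ofReal (‖f s‖ ^ p / s ^ p) ≤
      ∫⁻ s, ENNReal.ofReal (‖deriv f s‖ ^ p) := by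
  have hFmeas : Measurable fun s => ENNReal.ofReal (‖f s‖ ^ p / s ^ p) :=
    ((hf.continuous.norm.measurable.pow_const p).div
      (measurable_id.pow_const p)).ennreal_ofReal
  have hexhaust := (aecover_Iic tendsto_id).lintegral_tendsto_of_countably_generated
    (μ := volume) hFmeas.aemeasurable
  refine le_of_tendsto (ENNReal.Tendsto.const_mul hexhaust (.inr ENNReal.ofReal_ne_top)) ?_
  filter_upwards [eventually_ge_atTop a] with b hab
  have hIic : ∫⁻ s in Iic b, ENNReal.ofReal (‖f s‖ ^ p / s ^ p) =
      ∫⁻ s in Ioc a b, ENNReal.ofReal (‖f s‖ ^ p / s ^ p) := by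
    rw [← Iic_union_Ioc_eq_Iic hab, lintegral_union measurableSet_Ioc
      (Iic_disjoint_Ioc le_rfl), setLIntegral_eq_zero measurableSet_Iic, zero_add]
    intro s hs
    simp [hfa s hs, (zero_lt_one.trans hp).ne']
  exact hIic ▸ (hardy_setLIntegral_Ioc hp ha hab hf (hfa a le_rfl)).trans
    (setLIntegral_le_lintegral _ _)

end Hardy

/-! ### Logarithmic polar coordinates -/

lemma lintegral_Ioi_eq_lintegral_mul_exp_neg {R : ℝ} (hR : 0 < R) (f : ℝ → ℝ≥0∞) :
    ∫⁻ r in Ioi 0, f r =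
      ∫⁻ s, ENNReal.ofReal (R * Real.exp (-s)) * f (R * Real.exp (-s)) := by
  have himage : (fun s => R * Real.exp (-s)) '' univ = Ioi 0 := by
    refine Subset.antisymm (image_subset_iff.2 fun s _ => mul_pos hR (Real.exp_pos _)) ?_
    intro r (hr : 0 < r)
    refine ⟨-Real.log (r / R), mem_univ _, ?_⟩
    simp only [neg_neg, Real.exp_log (div_pos hr hR), mul_div_cancel₀ r hR.ne']
  have hderiv : ∀ s ∈ univ, HasDerivWithinAt (fun s => R * Real.exp (-s))
      (-(R * Real.exp (-s))) univ s := fun s _ =>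
    (((hasDerivAt_neg s).exp.const_mul R).congr_deriv (by ring)).hasDerivWithinAt
  have hinj : InjOn (fun s => R * Real.exp (-s)) univ := fun s _ t _ hst =>
    neg_injective (Real.exp_injective (mul_left_cancel₀ hR.ne' hst))
  rw [← himage, lintegral_image_eq_lintegral_abs_deriv_mul .univ hderiv hinj, setLIntegral_univ]
  simp only [abs_neg, abs_of_pos (mul_pos hR (Real.exp_pos _))]

lemma deriv_comp_exp_neg_smul {E F : Type*} [NormedAddCommGroup E] [NormedSpace ℝ E]
    [NormedAddCommGroup F] [NormedSpace ℝ F] {u : E → F} (hu : Differentiable ℝ u)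
    (ρ : ℝ) (ω : E) (s : ℝ) :
    deriv (fun s => u ((ρ * Real.exp (-s)) • ω)) s =
      -fderiv ℝ u ((ρ * Real.exp (-s)) • ω) ((ρ * Real.exp (-s)) • ω) := by
  have hray : HasDerivAt (fun s => (ρ * Real.exp (-s)) • ω) (-((ρ * Real.exp (-s)) • ω)) s := by
    convert (((hasDerivAt_neg s).exp.const_mul ρ).smul_const ω) using 1
    module
  rw [← map_neg]
  exact ((hu _).hasFDerivAt.comp_hasDerivAt s hray).deriv

lemma lintegral_volumeIoiPow (n : ℕ) {f : ℝ → ℝ≥0∞} (hf : Measurable f) :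
    ∫⁻ r : Ioi (0 : ℝ), f r ∂(.volumeIoiPow n) =
      ∫⁻ r in Ioi 0, ENNReal.ofReal (r ^ n) * f r := by
  have hdensity := lintegral_withDensity_eq_lintegral_mul (.comap ((↑) : Ioi (0 : ℝ) → ℝ) volume)
    (f := fun r => ENNReal.ofReal (r.1 ^ n)) (by fun_prop) (hf.comp measurable_subtype_coe)
  refine hdensity.trans ?_
  exact lintegral_subtype_comap measurableSet_Ioi fun r => ENNReal.ofReal (r ^ n) * f r

section PolarCoordinates

variable {E : Type*} [NormedAddCommGroup E] [NormedSpace ℝ E] [FiniteDimensional ℝ E]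
  [Nontrivial E] [MeasurableSpace E] [BorelSpace E] (μ : Measure E) [μ.IsAddHaarMeasure]

lemma lintegral_eq_lintegral_toSphere {f : E → ℝ≥0∞} (hf : Measurable f) :
    ∫⁻ x, f x ∂μ = ∫⁻ ω, (∫⁻ r in Ioi (0 : ℝ),
      ENNReal.ofReal (r ^ (Module.finrank ℝ E - 1)) * f (r • (ω : E))) ∂μ.toSphere := by
  have hfpolar : Measurable fun q : Metric.sphere (0 : E) 1 × Ioi (0 : ℝ) =>
      f ((q.2 : ℝ) • (q.1 : E)) := hf.comp (Continuous.measurable (by fun_prop))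
  calc ∫⁻ x, f x ∂μ = ∫⁻ x : ({0}ᶜ : Set E), f x ∂(μ.comap (↑)) := by
        rw [lintegral_subtype_comap (measurableSet_singleton _).compl, restrict_compl_singleton]
    _ = ∫⁻ q, f ((q.2 : ℝ) • (q.1 : E))
          ∂μ.toSphere.prod (.volumeIoiPow (Module.finrank ℝ E - 1)) := by
        rw [← μ.measurePreserving_homeomorphUnitSphereProd.lintegral_comp hfpolar]
        refine lintegral_congr fun x => congrArg f ?_
        exact (congrArg Subtype.val ((homeomorphUnitSphereProd E).symm_apply_apply x)).symm
    _ = ∫⁻ ω, (∫⁻ r : Ioi (0 : ℝ), f ((r : ℝ) • (ω : E))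
          ∂(.volumeIoiPow (Module.finrank ℝ E - 1))) ∂μ.toSphere :=
        lintegral_prod _ hfpolar.aemeasurable
    _ = _ := lintegral_congr fun ω => lintegral_volumeIoiPow _
        (hf.comp (Continuous.measurable (f := fun r : ℝ => r • (ω : E)) (by fun_prop)))

end PolarCoordinates

/-! ### Star gauges -/

/-- The gauge function of a bounded star body: continuous, positively homogeneous of degree one and
positive away from the origin, but not necessarily convex or even. The logarithm of such a function
serves as the radial coordinate in the Hardy inequality. -/
structure IsStarGauge {E : Type*} [NormedAddCommGroup E] [NormedSpace ℝ E] (g : E → ℝ) :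
    Prop where
  continuous : Continuous g
  map_smul : ∀ ⦃t : ℝ⦄, 0 ≤ t → ∀ x, g (t • x) = t * g x
  pos : ∀ ⦃x⦄, x ≠ 0 → 0 < g x

namespace IsStarGauge

variable {E : Type*} [NormedAddCommGroup E] [NormedSpace ℝ E] {g : E → ℝ}

lemma map_zero (hg : IsStarGauge g) : g 0 = 0 := by
  simpa only [zero_smul, zero_mul] using hg.map_smul le_rfl 0

lemma nonneg (hg : IsStarGauge g) (x : E) : 0 ≤ g x := by
  rcases eq_or_ne x 0 with rfl | hx
  · exact hg.map_zero.ge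
  · exact (hg.pos hx).le

lemma exists_pos_mul_norm_le [FiniteDimensional ℝ E] (hg : IsStarGauge g) :
    ∃ δ > 0, ∀ x, δ * ‖x‖ ≤ g x := by
  have : ProperSpace E := FiniteDimensional.proper_real E
  obtain ⟨δ, hδ, hle⟩ := (isCompact_sphere (0 : E) 1).exists_forall_le' hg.continuous.continuousOn
    fun x hx => hg.pos (ne_zero_of_mem_unit_sphere ⟨x, hx⟩)
  refine ⟨δ, hδ, fun x => ?_⟩
  rcases eq_or_ne x 0 with rfl | hx
  · simp only [norm_zero, mul_zero, hg.map_zero, le_refl]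
  have hunit : ‖x‖⁻¹ • x ∈ Metric.sphere (0 : E) 1 := by
    simp [norm_smul, hx]
  have hx_pos := norm_pos_iff.2 hx
  have := hle _ hunit
  rwa [hg.map_smul (by positivity), le_inv_mul_iff₀' hx_pos] at this

lemma lt_sSup_image [Nontrivial E] (hg : IsStarGauge g) {Ω : Set E} (hΩ : IsOpen Ω)
    (hbdd : BddAbove (g '' Ω)) {x : E} (hx : x ∈ Ω) : g x < sSup (g '' Ω) := by
  suffices ∃ y ∈ Ω, g x < g y by
    obtain ⟨y, hy, hxy⟩ := this
    exact hxy.trans_le (le_csSup hbdd (mem_image_of_mem g hy))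
  rcases eq_or_ne x 0 with rfl | hx0
  · obtain ⟨y, hyΩ, hy0⟩ := (dense_compl_singleton (0 : E)).inter_open_nonempty Ω hΩ ⟨0, hx⟩
    exact ⟨y, hyΩ, hg.map_zero ▸ hg.pos hy0⟩
  · have hnear : ∀ᶠ t : ℝ in 𝓝[>] 1, t • x ∈ Ω := by
      refine nhdsWithin_le_nhds ?_
      exact (continuous_id.smul continuous_const).continuousAt.eventually_mem
        (hΩ.mem_nhds (by simpa using hx))
    obtain ⟨t, htΩ, ht⟩ := (hnear.and self_mem_nhdsWithin).exists
    have ht : 1 < t := ht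
    refine ⟨t • x, htΩ, ?_⟩
    rw [hg.map_smul (by linarith)]
    exact lt_mul_of_one_lt_left (hg.pos hx0) ht

lemma exists_between_sSup_image [Nontrivial E] (hg : IsStarGauge g) {Ω K : Set E}
    (hΩ : IsOpen Ω) (hne : Ω.Nonempty) (hbdd : BddAbove (g '' Ω)) (hK : IsCompact K)
    (hKΩ : K ⊆ Ω) : ∃ M, 0 < M ∧ M < sSup (g '' Ω) ∧ ∀ x ∈ K, g x < M := by
  obtain ⟨x, hx⟩ := hne
  obtain ⟨z, hz, hmax⟩ := (hK.insert x).exists_isMaxOn (insert_nonempty x K)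
    hg.continuous.continuousOn
  have hzΩ : z ∈ Ω := insert_subset hx hKΩ hz
  obtain ⟨M, hzM, hMR⟩ := exists_between (hg.lt_sSup_image hΩ hbdd hzΩ)
  exact ⟨M, (hg.nonneg z).trans_lt hzM, hMR,
    fun y hy => (hmax (mem_insert_of_mem x hy)).trans_lt hzM⟩

section Integration

variable [FiniteDimensional ℝ E] [Nontrivial E] [MeasurableSpace E] [BorelSpace E]
  (μ : Measure E) [μ.IsAddHaarMeasure]

lemma lintegral_inv_pow_mul (hg : IsStarGauge g) {R : ℝ} (hR : 0 < R) {f : E → ℝ≥0∞}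
    (hf : Measurable f) :
    ∫⁻ x, ENNReal.ofReal (g x ^ Module.finrank ℝ E)⁻¹ * f x ∂μ =
      ∫⁻ ω, ENNReal.ofReal (g ω ^ Module.finrank ℝ E)⁻¹ *
        (∫⁻ s, f ((R / g ω * Real.exp (-s)) • (ω : E))) ∂μ.toSphere := by
  have hgm := hg.continuous.measurable
  rw [lintegral_eq_lintegral_toSphere μ (by fun_prop)]
  refine lintegral_congr fun ω => ?_
  have hgω : 0 < g ω := hg.pos (ne_zero_of_mem_unit_sphere ω)
  rw [lintegral_Ioi_eq_lintegral_mul_exp_neg (div_pos hR hgω),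
    ← lintegral_const_mul' _ _ ENNReal.ofReal_ne_top]
  refine lintegral_congr fun s => ?_
  set r := R / g ω * Real.exp (-s)
  have hr : 0 < r := mul_pos (div_pos hR hgω) (Real.exp_pos _)
  rw [← mul_assoc, ← mul_assoc, ← ENNReal.ofReal_mul hr.le,
    mul_pow_sub_one Module.finrank_pos.ne', ← ENNReal.ofReal_mul (by positivity),
    hg.map_smul hr.le, mul_pow r (g ω), mul_inv, mul_inv_cancel_left₀ (by positivity)]

end Integration

section Hardy

variable {F : Type*} [NormedAddCommGroup F] {p M R : ℝ} {u : E → F}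

lemma rpow_div_pow_mul_log_rpow_nonneg (hg : IsStarGauge g) (hp : p ≠ 0) (hMR : M ≤ R)
    (huM : ∀ x, M ≤ g x → u x = 0) (n : ℕ) (x : E) :
    0 ≤ ‖u x‖ ^ p / (g x ^ n * Real.log (R / g x) ^ p) := by
  rcases le_or_gt M (g x) with hle | hlt
  · simp [huM x hle, hp]
  · have hlog : 0 ≤ Real.log (R / g x) := by
      rcases (hg.nonneg x).eq_or_lt with h0 | h0
      · simp [← h0]
      · exact Real.log_nonneg ((one_le_div h0).2 (hlt.le.trans hMR))
    have := hg.nonneg x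
    positivity

section NormedSpace

variable [NormedSpace ℝ F] [FiniteDimensional ℝ E] [Nontrivial E] [MeasurableSpace E]
  [BorelSpace E] (μ : Measure E) [μ.IsAddHaarMeasure]

lemma integrable_norm_fderiv_self_rpow_div_pow (hg : IsStarGauge g) (hp : 0 < p)
    (hu : ContDiff ℝ 1 u) (hcomp : HasCompactSupport u) :
    Integrable (fun x => ‖fderiv ℝ u x x‖ ^ p / g x ^ Module.finrank ℝ E) μ := by
  obtain ⟨δ, hδ, hδg⟩ := hg.exists_pos_mul_norm_le
  have hdu : Continuous (fderiv ℝ u) := hu.continuous_fderiv one_ne_zero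
  obtain ⟨C, hC⟩ := (hcomp.fderiv ℝ).exists_bound_of_continuous hdu
  have hmeas : AEStronglyMeasurable
      (fun x => ‖fderiv ℝ u x x‖ ^ p / g x ^ Module.finrank ℝ E) μ :=
    (((hdu.clm_apply continuous_id).norm.measurable.pow_const p).div
      (hg.continuous.measurable.pow_const _)).aestronglyMeasurable
  have hdecay : ∀ᵐ x ∂μ, ‖‖fderiv ℝ u x x‖ ^ p / g x ^ Module.finrank ℝ E‖ ≤
      C ^ p / δ ^ Module.finrank ℝ E * ‖x‖ ^ (-(Module.finrank ℝ E - p)) := by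
    filter_upwards [compl_mem_ae_iff.2 (measure_singleton (0 : E))] with x hx
    have hx_pos : 0 < ‖x‖ := norm_pos_iff.2 hx
    have hC0 : 0 ≤ C := (norm_nonneg _).trans (hC x)
    have hgx := hg.pos hx
    rw [Real.norm_of_nonneg (by positivity)]
    calc ‖fderiv ℝ u x x‖ ^ p / g x ^ Module.finrank ℝ E
        ≤ (C * ‖x‖) ^ p / (δ * ‖x‖) ^ Module.finrank ℝ E := by
          gcongr
          · exact (fderiv ℝ u x).le_of_opNorm_le (hC x) x
          · exact hδg x
      _ = C ^ p / δ ^ Module.finrank ℝ E * ‖x‖ ^ (-(Module.finrank ℝ E - p)) := by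
          rw [Real.mul_rpow hC0 hx_pos.le, mul_pow, neg_sub, Real.rpow_sub_natCast hx_pos.ne',
            mul_div_mul_comm]
  have hloc := locallyIntegrable_of_norm_le_rpow Module.finrank_pos
    (sub_lt_self _ hp) hdecay hmeas
  refine (integrableOn_iff_integrable_of_support_subset fun x hx => ?_).1
    (hloc.integrableOn_isCompact hcomp)
  contrapose! hx
  simp [fderiv_of_notMem_tsupport ℝ hx, hp.ne']

end NormedSpace

variable [InnerProductSpace ℝ F]

lemma log_hardy_lintegral_ray (hg : IsStarGauge g) (hp : 1 < p) (hu : ContDiff ℝ 1 u)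
    (hM : 0 < M) (hMR : M < R) (huM : ∀ x, M ≤ g x → u x = 0) {ω : E} (hω : ω ≠ 0) :
    ENNReal.ofReal (((p - 1) / p) ^ p) * ∫⁻ s, ENNReal.ofReal
        (‖u ((R / g ω * Real.exp (-s)) • ω)‖ ^ p /
          Real.log (R / g ((R / g ω * Real.exp (-s)) • ω)) ^ p) ≤
      ∫⁻ s, ENNReal.ofReal (‖fderiv ℝ u ((R / g ω * Real.exp (-s)) • ω)
        ((R / g ω * Real.exp (-s)) • ω)‖ ^ p) := by
  have hR : 0 < R := hM.trans hMR
  have hgω : 0 < g ω := hg.pos hω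
  have hg_ray s : g ((R / g ω * Real.exp (-s)) • ω) = R * Real.exp (-s) := by
    rw [hg.map_smul (by positivity)]
    field_simp
  have hlog s : Real.log (R / g ((R / g ω * Real.exp (-s)) • ω)) = s := by
    rw [hg_ray, div_mul_cancel_left₀ hR.ne', ← Real.exp_neg, neg_neg, Real.log_exp]
  have hvanish : ∀ s ≤ Real.log (R / M), u ((R / g ω * Real.exp (-s)) • ω) = 0 := by
    intro s hs
    have hexp := (Real.le_log_iff_exp_le (by positivity)).1 hs
    refine huM _ ?_
    rwa [hg_ray, Real.exp_neg, ← div_eq_mul_inv, le_div_comm₀ hM (Real.exp_pos s)]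
  have hray := hardy_lintegral hp (Real.log_pos ((one_lt_div hM).2 hMR))
    (hu.comp (g := u) (f := fun s => (R / g ω * Real.exp (-s)) • ω) (by fun_prop)) hvanish
  simpa only [Function.comp_def, deriv_comp_exp_neg_smul (hu.differentiable one_ne_zero), norm_neg,
    hlog] using hray

variable [FiniteDimensional ℝ E] [Nontrivial E] [MeasurableSpace E] [BorelSpace E]
  (μ : Measure E) [μ.IsAddHaarMeasure]

lemma log_hardy_lintegral (hg : IsStarGauge g) (hp : 1 < p) (hu : ContDiff ℝ 1 u)
    (hM : 0 < M) (hMR : M < R) (huM : ∀ x, M ≤ g x → u x = 0) :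
    ENNReal.ofReal (((p - 1) / p) ^ p) * ∫⁻ x, ENNReal.ofReal
        (‖u x‖ ^ p / (g x ^ Module.finrank ℝ E * Real.log (R / g x) ^ p)) ∂μ ≤
      ∫⁻ x, ENNReal.ofReal (‖fderiv ℝ u x x‖ ^ p / g x ^ Module.finrank ℝ E) ∂μ := by
  have hR : 0 < R := hM.trans hMR
  have hgm : Measurable g := hg.continuous.measurable
  have hgN x : 0 ≤ (g x ^ Module.finrank ℝ E)⁻¹ := inv_nonneg.2 (pow_nonneg (hg.nonneg x) _)
  have hum : Measurable fun x => ‖u x‖ := hu.continuous.norm.measurable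
  have hdum : Measurable fun x => ‖fderiv ℝ u x x‖ :=
    ((hu.continuous_fderiv one_ne_zero).clm_apply continuous_id).norm.measurable
  have hsplit x : ‖u x‖ ^ p / (g x ^ Module.finrank ℝ E * Real.log (R / g x) ^ p) =
      (g x ^ Module.finrank ℝ E)⁻¹ * (‖u x‖ ^ p / Real.log (R / g x) ^ p) := by
    rw [inv_mul_eq_div, div_div, mul_comm]
  simp only [hsplit, div_eq_inv_mul (‖fderiv ℝ u _ _‖ ^ p), ENNReal.ofReal_mul (hgN _)]
  rw [hg.lintegral_inv_pow_mul μ hR (by fun_prop), hg.lintegral_inv_pow_mul μ hR (by fun_prop),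
    ← lintegral_const_mul' _ _ ENNReal.ofReal_ne_top]
  refine lintegral_mono fun ω => ?_
  rw [mul_left_comm]
  gcongr
  exact hg.log_hardy_lintegral_ray hp hu hM hMR huM (ne_zero_of_mem_unit_sphere ω)

lemma log_hardy_integral (hg : IsStarGauge g) (hp : 1 < p) (hu : ContDiff ℝ 1 u)
    (hcomp : HasCompactSupport u) (hM : 0 < M) (hMR : M < R) (huM : ∀ x, M ≤ g x → u x = 0) :
    ((p - 1) / p) ^ p *
        ∫ x, ‖u x‖ ^ p / (g x ^ Module.finrank ℝ E * Real.log (R / g x) ^ p) ∂μ ≤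
      ∫ x, ‖fderiv ℝ u x x‖ ^ p / g x ^ Module.finrank ℝ E ∂μ := by
  have hp0 : 0 < p := by linarith
  have hc : 0 ≤ ((p - 1) / p) ^ p := Real.rpow_nonneg (div_nonneg (by linarith) hp0.le) p
  have hright x : 0 ≤ ‖fderiv ℝ u x x‖ ^ p / g x ^ Module.finrank ℝ E :=
    div_nonneg (by positivity) (pow_nonneg (hg.nonneg x) _)
  have hleft := hg.rpow_div_pow_mul_log_rpow_nonneg hp0.ne' hMR.le huM (Module.finrank ℝ E)
  have hint := hg.integrable_norm_fderiv_self_rpow_div_pow μ hp0 hu hcomp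
  have hmeas : Measurable fun x =>
      ‖u x‖ ^ p / (g x ^ Module.finrank ℝ E * Real.log (R / g x) ^ p) := by
    have hgm : Measurable g := hg.continuous.measurable
    have hum : Measurable fun x => ‖u x‖ := hu.continuous.norm.measurable
    fun_prop
  have hlintegral := hg.log_hardy_lintegral μ hp hu hM hMR huM
  rw [← ofReal_integral_eq_lintegral_ofReal hint (.of_forall hright)] at hlintegral
  rw [integral_eq_lintegral_of_nonneg_ae (.of_forall hleft) hmeas.aestronglyMeasurable]
  simpa only [ENNReal.toReal_mul, ENNReal.toReal_ofReal hc,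
    ENNReal.toReal_ofReal (integral_nonneg hright)] using
    ENNReal.toReal_mono ENNReal.ofReal_ne_top hlintegral

end Hardy

end IsStarGauge

theorem finsler_hardy_critical_general {E F : Type*} [NormedAddCommGroup E] [NormedSpace ℝ E]
    [FiniteDimensional ℝ E] [Nontrivial E] [MeasurableSpace E] [BorelSpace E] (μ : Measure E)
    [μ.IsAddHaarMeasure] [NormedAddCommGroup F] [InnerProductSpace ℝ F] {g : E → ℝ}
    (hg : IsStarGauge g) {p : ℝ} (hp : 1 < p) {Ω : Set E} (hΩopen : IsOpen Ω)
    (hΩbdd : Bornology.IsBounded Ω) {u : E → F} (hu : ContDiff ℝ 1 u) (hsupp : tsupport u ⊆ Ω) :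
    ((p - 1) / p) ^ p * ∫ x in Ω,
        ‖u x‖ ^ p / (g x ^ Module.finrank ℝ E * Real.log (sSup (g '' Ω) / g x) ^ p) ∂μ ≤
      ∫ x in Ω, ‖fderiv ℝ u x x‖ ^ p / g x ^ Module.finrank ℝ E ∂μ := by
  rcases Ω.eq_empty_or_nonempty with rfl | hne
  · simp
  have : ProperSpace E := FiniteDimensional.proper_real E
  have hp0 : p ≠ 0 := by linarith
  have hcomp : HasCompactSupport u :=
    Metric.isCompact_of_isClosed_isBounded (isClosed_tsupport u) (hΩbdd.subset hsupp)
  have hbdd : BddAbove (g '' Ω) :=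
    (hΩbdd.isCompact_closure.bddAbove_image hg.continuous.continuousOn).mono
      (image_mono subset_closure)
  obtain ⟨M, hM, hMR, hlt⟩ := hg.exists_between_sSup_image hΩopen hne hbdd hcomp hsupp
  have huM : ∀ x, M ≤ g x → u x = 0 := fun x hx =>
    image_eq_zero_of_notMem_tsupport fun hxu => (hlt x hxu).not_ge hx
  have hout : ∀ x ∉ Ω, x ∉ tsupport u := fun x hx hxu => hx (hsupp hxu)
  rw [setIntegral_eq_integral_of_forall_compl_eq_zero,
    setIntegral_eq_integral_of_forall_compl_eq_zero]
  · exact hg.log_hardy_integral μ hp hu hcomp hM hMR huM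
  · intro x hx
    simp [fderiv_of_notMem_tsupport ℝ (hout x hx), hp0]
  · intro x hx
    simp [image_eq_zero_of_notMem_tsupport (hout x hx), hp0]

/-! ### The polar function of a Finsler norm -/

section PolarNorm

variable {N : ℕ} {H : Euc N → ℝ} {a : ℝ}

lemma inner_div_le_of_mul_norm_le (ha : 0 < a) (hHa : ∀ ξ, a * ‖ξ‖ ≤ H ξ) {ξ : Euc N} (hξ : ξ ≠ 0)
    (x : Euc N) : ⟪ξ, x⟫ / H ξ ≤ a⁻¹ * ‖x‖ := by
  have hξ_pos : 0 < ‖ξ‖ := norm_pos_iff.2 hξ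
  have hHξ : 0 < H ξ := (mul_pos ha hξ_pos).trans_le (hHa ξ)
  rw [div_le_iff₀ hHξ]
  calc ⟪ξ, x⟫ ≤ ‖ξ‖ * ‖x‖ := real_inner_le_norm ξ x
    _ = a⁻¹ * ‖x‖ * (a * ‖ξ‖) := by field_simp
    _ ≤ a⁻¹ * ‖x‖ * H ξ := by gcongr; exact hHa ξ

lemma inner_div_le_polarNorm (ha : 0 < a) (hHa : ∀ ξ, a * ‖ξ‖ ≤ H ξ) {ξ : Euc N} (hξ : ξ ≠ 0)
    (x : Euc N) : ⟪ξ, x⟫ / H ξ ≤ polarNorm H x := by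
  refine le_csSup ⟨a⁻¹ * ‖x‖, ?_⟩ ⟨ξ, hξ, rfl⟩
  rintro _ ⟨η, hη, rfl⟩
  exact inner_div_le_of_mul_norm_le ha hHa hη x

lemma polarNorm_smul {t : ℝ} (ht : 0 ≤ t) (x : Euc N) :
    polarNorm H (t • x) = t * polarNorm H x := by
  rw [polarNorm, polarNorm, ← smul_eq_mul, ← Real.sSup_smul_of_nonneg ht]
  congr 1
  ext r
  constructor
  · rintro ⟨ξ, hξ, rfl⟩
    exact ⟨_, ⟨ξ, hξ, rfl⟩, by simp only [real_inner_smul_right, mul_div_assoc, smul_eq_mul]⟩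
  · rintro ⟨_, ⟨ξ, hξ, rfl⟩, rfl⟩
    exact ⟨ξ, hξ, by simp only [real_inner_smul_right, mul_div_assoc, smul_eq_mul]⟩

lemma polarNorm_pos (ha : 0 < a) (hHa : ∀ ξ, a * ‖ξ‖ ≤ H ξ) {x : Euc N} (hx : x ≠ 0) :
    0 < polarNorm H x := by
  have hHx : 0 < H x := (mul_pos ha (norm_pos_iff.2 hx)).trans_le (hHa x)
  exact (div_pos (real_inner_self_pos.2 hx) hHx).trans_le (inner_div_le_polarNorm ha hHa hx x)

lemma polarNorm_nonneg (ha : 0 < a) (hHa : ∀ ξ, a * ‖ξ‖ ≤ H ξ) (x : Euc N) :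
    0 ≤ polarNorm H x := by
  rcases eq_or_ne x 0 with rfl | hx
  · simpa using (polarNorm_smul (H := H) le_rfl (0 : Euc N)).ge
  · exact (polarNorm_pos ha hHa hx).le

lemma lipschitzWith_polarNorm (ha : 0 < a) (hHa : ∀ ξ, a * ‖ξ‖ ≤ H ξ) :
    LipschitzWith (Real.toNNReal a⁻¹) (polarNorm H) := by
  refine LipschitzWith.of_le_add_mul' _ fun x y => Real.sSup_le ?_ ?_
  · rintro _ ⟨ξ, hξ, rfl⟩
    calc ⟪ξ, x⟫ / H ξ = ⟪ξ, y⟫ / H ξ + ⟪ξ, x - y⟫ / H ξ := by rw [inner_sub_right]; ring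
      _ ≤ polarNorm H y + a⁻¹ * dist x y := by
        rw [dist_eq_norm]
        exact add_le_add (inner_div_le_polarNorm ha hHa hξ y)
          (inner_div_le_of_mul_norm_le ha hHa hξ _)
  · have := polarNorm_nonneg ha hHa y
    positivity

lemma IsFinslerNorm.isStarGauge_polarNorm (hH : IsFinslerNorm H) : IsStarGauge (polarNorm H) := by
  obtain ⟨a, _, ha, -, hbounds⟩ := hH.bounds
  have hHa ξ : a * ‖ξ‖ ≤ H ξ := (hbounds ξ).1
  exact ⟨(lipschitzWith_polarNorm ha hHa).continuous, fun _ => polarNorm_smul,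
    fun _ => polarNorm_pos ha hHa⟩

end PolarNorm

lemma abs_inner_inv_smul_gradient {E : Type*} [NormedAddCommGroup E] [InnerProductSpace ℝ E]
    [CompleteSpace E] (u : E → ℝ) (x : E) {c : ℝ} (hc : 0 ≤ c) :
    |⟪c⁻¹ • x, gradient u x⟫| = |fderiv ℝ u x x| / c := by
  rw [real_inner_comm, inner_gradient_left, map_smul, smul_eq_mul, inv_mul_eq_div, abs_div,
    abs_of_nonneg hc]

/-- Sharp anisotropic critical Hardy inequality (p = N) on a bounded domain,
with R = sup over Ω of H⁰. -/
theorem finsler_hardy_critical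
    (N : ℕ) (hN : 2 ≤ N) (H : Euc N → ℝ) (hH : IsFinslerNorm H)
    (Ω : Set (Euc N)) (hΩopen : IsOpen Ω) (hΩconn : IsConnected Ω)
    (hΩbdd : Bornology.IsBounded Ω)
    (u : Euc N → ℝ) (hu : IsTestFun Ω u) :
    (((N : ℝ) - 1) / (N : ℝ)) ^ N *
        ∫ x in Ω, |u x| ^ N /
          (polarNorm H x ^ N * Real.log (sSup (polarNorm H '' Ω) / polarNorm H x) ^ N)
      ≤ ∫ x in Ω, |⟪(polarNorm H x)⁻¹ • x, gradient u x⟫| ^ N := by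
  have : NeZero N := ⟨by omega⟩
  have hgauge := hH.isStarGauge_polarNorm
  simpa only [abs_inner_inv_smul_gradient u _ (hgauge.nonneg _), div_pow, Real.norm_eq_abs,
    Real.rpow_natCast, finrank_euclideanSpace_fin] using
    finsler_hardy_critical_general volume hgauge (p := N) (by exact_mod_cast hN) hΩopen hΩbdd
      (hu.1.of_le (by exact_mod_cast le_top)) hu.2.2
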